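/- The inverse backstepping kernel r is a real-analytic function on ℝ² and solves the Goursat problem: r_xx(x,y) − r_yy(x,y) = (λ/D) r(x,y) for all (x,y) ∈ ℝ², r(0,y) = 0 for all y ∈ ℝ, and r(x,x) = (λ/(2D)) x for all x ∈ ℝ (so that (d/dx) r(x,x) = λ/(2D)). -/

import Mathlib

/-- `Ψ_j(x,y) = 2^{-j} ∑_{m=0}^∞ (−(λ/(4D))(y² − x²))^m / (m! (m+j)!)`,
which equals `J_j(z)/z^j` with `z = √((λ/D)(y² − x²))`. -/
noncomputable def Psi (D lam : ℝ) (j : ℕ) (x y : ℝ) : ℝ :=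
  (1 / 2 ^ j) *
    ∑' m : ℕ, (-(lam / (4 * D)) * (y ^ 2 - x ^ 2)) ^ m / (m.factorial * (m + j).factorial : ℝ)

/-- The inverse backstepping kernel `r(x,y) = (λ/D) x Ψ₁(x,y)`. -/
noncomputable def rker (D lam : ℝ) (x y : ℝ) : ℝ :=
  lam / D * x * Psi D lam 1 x y

noncomputable def FF (j : ℕ) (w : ℝ) : ℝ :=
  ∑' m : ℕ, w ^ m / (m.factorial * (m + j).factorial : ℝ)

theorem FF_bound (j m : ℕ) (w R : ℝ) (h : |w| ≤ R) :
    ‖w ^ m / (m.factorial * (m + j).factorial : ℝ)‖ ≤ R ^ m / (m.factorial : ℝ) := by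
  have h1 : (1 : ℝ) ≤ (m + j).factorial := by exact_mod_cast Nat.factorial_pos _
  have h0 : (0 : ℝ) < m.factorial := by exact_mod_cast Nat.factorial_pos _
  have hR : 0 ≤ R := (abs_nonneg w).trans h
  rw [norm_div, norm_pow, Real.norm_eq_abs, Real.norm_of_nonneg (by positivity)]
  gcongr
  nlinarith

theorem FF_summable (j : ℕ) (w : ℝ) :
    Summable fun m : ℕ => w ^ m / (m.factorial * (m + j).factorial : ℝ) :=
  Summable.of_norm_bounded (Real.summable_pow_div_factorial |w|)
    fun m => FF_bound j m w |w| le_rfl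

theorem FF_hasFPS (j : ℕ) : HasFPowerSeriesOnBall (FF j)
    (FormalMultilinearSeries.ofScalars ℝ
      (fun m : ℕ => 1 / (m.factorial * (m + j).factorial : ℝ))) 0 ⊤ := by
  set c : ℕ → ℝ := fun m : ℕ => 1 / (m.factorial * (m + j).factorial : ℝ) with hc
  have hr : (FormalMultilinearSeries.ofScalars ℝ c).radius = ⊤ := by
    refine FormalMultilinearSeries.radius_eq_top_of_summable_norm _ fun r => ?_
    refine Summable.of_nonneg_of_le (fun _ => by positivity) (fun m => ?_)
      (Real.summable_pow_div_factorial r)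
    have := FF_bound j m r r (by simp)
    rw [norm_div, norm_pow] at this
    rw [FormalMultilinearSeries.ofScalars_norm]
    simp only [hc, norm_div, norm_one] at this ⊢
    have h2 : ‖(r : ℝ)‖ = r := by simp
    rw [h2] at this
    calc _ = _ := by ring
      _ ≤ _ := this
  have h := FormalMultilinearSeries.hasFPowerSeriesOnBall (FormalMultilinearSeries.ofScalars ℝ c)
    (by rw [hr]; simp)
  rw [hr] at h
  convert h using 1
  funext w
  unfold FF
  change _ = FormalMultilinearSeries.ofScalarsSum c w
  rw [FormalMultilinearSeries.ofScalarsSum_eq_tsum]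
  refine tsum_congr fun m => ?_
  simp only [hc, smul_eq_mul]
  ring

theorem FF_analytic (j : ℕ) (w : ℝ) : AnalyticAt ℝ (FF j) w :=
  (FF_hasFPS j).analyticAt_of_mem (by simp)

theorem FF_hasDerivAt (j : ℕ) (w : ℝ) : HasDerivAt (FF j) (FF (j + 1) w) w := by
  have hs : HasDerivAt (fun z : ℝ => ∑' m : ℕ, z ^ m / (m.factorial * (m + j).factorial : ℝ))
      (∑' m : ℕ, (m * w ^ (m - 1)) / (m.factorial * (m + j).factorial : ℝ)) w := by
    have hb : Summable fun m : ℕ => (m * (|w| + 1) ^ (m - 1)) / (m.factorial : ℝ) := by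
      rw [← summable_nat_add_iff 1]
      refine (Real.summable_pow_div_factorial (|w| + 1)).congr fun m => ?_
      rw [Nat.factorial_succ]
      push_cast
      field_simp
    refine hasDerivAt_tsum_of_isPreconnected (t := Metric.ball 0 (|w| + 1)) (y₀ := w) hb
      Metric.isOpen_ball (convex_ball _ _).isPreconnected
      (fun m z _ => (hasDerivAt_pow m z).div_const _) (fun m z hz => ?_) (by simp)
      (FF_summable j w) (by simp)
    have hz' : |z| ≤ |w| + 1 := by
      have := mem_ball_zero_iff.1 hz
      rw [Real.norm_eq_abs] at this
      exact this.le
    have h1 : (1 : ℝ) ≤ (m + j).factorial := by exact_mod_cast Nat.factorial_pos _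
    have h0 : (0 : ℝ) < m.factorial := by exact_mod_cast Nat.factorial_pos _
    rw [norm_div, norm_mul, norm_pow, Real.norm_eq_abs z,
      Real.norm_of_nonneg (by positivity : (0:ℝ) ≤ m),
      Real.norm_of_nonneg (by positivity : (0:ℝ) ≤ m.factorial * (m + j).factorial)]
    gcongr
    nlinarith
  have e : (∑' m : ℕ, (m * w ^ (m - 1)) / (m.factorial * (m + j).factorial : ℝ))
      = FF (j + 1) w := by
    have key : ∀ m : ℕ, ((m + 1 : ℕ) * w ^ (m + 1 - 1)) /
        ((m + 1).factorial * (m + 1 + j).factorial : ℝ)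
        = w ^ m / (m.factorial * (m + (j + 1)).factorial : ℝ) := by
      intro m
      rw [Nat.factorial_succ m, show m + 1 + j = m + (j + 1) by ring]
      have h1 : ((m + (j + 1)).factorial : ℝ) ≠ 0 := by exact_mod_cast Nat.factorial_ne_zero _
      push_cast
      field_simp
    rw [Summable.tsum_eq_zero_add]
    · simp only [key, FF]
      simp
    · rw [← summable_nat_add_iff 1]
      simp only [key]
      exact FF_summable (j + 1) w
  rw [e] at hs
  exact hs

theorem FF_rec (j : ℕ) (w : ℝ) : w * FF (j + 2) w + (j + 1) * FF (j + 1) w = FF j w := by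
  have hA : HasSum (fun m : ℕ => m * w ^ m / (m.factorial * (m + (j + 1)).factorial : ℝ))
      (w * FF (j + 2) w) := by
    rw [← hasSum_nat_add_iff' 1]
    simp only [Finset.range_one, Finset.sum_singleton, Nat.cast_zero, zero_mul, zero_div, sub_zero]
    refine ((FF_summable (j + 2) w).hasSum.mul_left w).congr_fun ?_
    intro m
    rw [Nat.factorial_succ m, show m + 1 + (j + 1) = m + (j + 2) by ring]
    have h1 : ((m + (j + 2)).factorial : ℝ) ≠ 0 := by exact_mod_cast Nat.factorial_ne_zero _
    push_cast
    field_simp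
    ring
  have hB := ((FF_summable (j + 1) w).hasSum.mul_left ((j : ℝ) + 1))
  have h := (hA.add hB).tsum_eq
  rw [show FF (j + 1) w = ∑' m : ℕ, w ^ m / (m.factorial * (m + (j + 1)).factorial : ℝ) from rfl,
    ← h]
  unfold FF
  refine tsum_congr fun m => ?_
  rw [show m + (j + 1) = (m + j) + 1 by ring, Nat.factorial_succ (m + j)]
  have h1 : ((m + j).factorial : ℝ) ≠ 0 := by exact_mod_cast Nat.factorial_ne_zero _
  have h2 : (m : ℝ) + j + 1 ≠ 0 := by positivity
  push_cast
  field_simp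
  ring

theorem rker_eq (D lam x y : ℝ) : rker D lam x y =
    lam / D * x * (1 / 2 * FF 1 (-(lam / (4 * D)) * (y ^ 2 - x ^ 2))) := by
  simp [rker, Psi, FF]

theorem wx_deriv (k x y : ℝ) :
    HasDerivAt (fun x' : ℝ => -k * (y ^ 2 - x' ^ 2)) (2 * k * x) x := by
  have := (((hasDerivAt_id x).pow 2).const_sub (y ^ 2)).const_mul (-k)
  refine this.congr_deriv ?_
  simp
  ring

theorem wy_deriv (k x y : ℝ) :
    HasDerivAt (fun y' : ℝ => -k * (y' ^ 2 - x ^ 2)) (-2 * k * y) y := by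
  have := (((hasDerivAt_id y).pow 2).sub_const (x ^ 2)).const_mul (-k)
  refine this.congr_deriv ?_
  simp
  ring

theorem Fx_deriv (j : ℕ) (k x y : ℝ) :
    HasDerivAt (fun x' : ℝ => FF j (-k * (y ^ 2 - x' ^ 2)))
      (FF (j + 1) (-k * (y ^ 2 - x ^ 2)) * (2 * k * x)) x :=
  (FF_hasDerivAt j _).comp x (wx_deriv k x y)

theorem Fy_deriv (j : ℕ) (k x y : ℝ) :
    HasDerivAt (fun y' : ℝ => FF j (-k * (y' ^ 2 - x ^ 2)))
      (FF (j + 1) (-k * (y ^ 2 - x ^ 2)) * (-2 * k * y)) y :=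
  (FF_hasDerivAt j _).comp y (wy_deriv k x y)

theorem dxx (c k x y : ℝ) :
    iteratedDeriv 2 (fun x' : ℝ => c * x' * (1 / 2 * FF 1 (-k * (y ^ 2 - x' ^ 2)))) x
      = c / 2 * (6 * k * x * FF 2 (-k * (y ^ 2 - x ^ 2))
        + 4 * k ^ 2 * x ^ 3 * FF 3 (-k * (y ^ 2 - x ^ 2))) := by
  rw [iteratedDeriv_succ, iteratedDeriv_one]
  have h1 : deriv (fun x' : ℝ => c * x' * (1 / 2 * FF 1 (-k * (y ^ 2 - x' ^ 2))))
      = fun x' => c / 2 * (FF 1 (-k * (y ^ 2 - x' ^ 2))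
        + 2 * k * (x' ^ 2 * FF 2 (-k * (y ^ 2 - x' ^ 2)))) := by
    funext z
    have := ((hasDerivAt_id z).const_mul c).mul ((Fx_deriv 1 k z y).const_mul (1 / 2))
    refine (this.congr_deriv ?_).deriv
    simp
    ring
  rw [h1]
  have := ((Fx_deriv 1 k x y).add ((((hasDerivAt_id x).pow 2).mul
    (Fx_deriv 2 k x y)).const_mul (2 * k))).const_mul (c / 2)
  refine (this.congr_deriv ?_).deriv
  simp only [Pi.pow_apply, id, Nat.reduceAdd, Nat.reduceSub, Nat.cast_ofNat, pow_one]
  ring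

theorem dyy (c k x y : ℝ) :
    iteratedDeriv 2 (fun y' : ℝ => c * x * (1 / 2 * FF 1 (-k * (y' ^ 2 - x ^ 2)))) y
      = c / 2 * (-2 * k * x * FF 2 (-k * (y ^ 2 - x ^ 2))
        + 4 * k ^ 2 * x * y ^ 2 * FF 3 (-k * (y ^ 2 - x ^ 2))) := by
  rw [iteratedDeriv_succ, iteratedDeriv_one]
  have h1 : deriv (fun y' : ℝ => c * x * (1 / 2 * FF 1 (-k * (y' ^ 2 - x ^ 2))))
      = fun y' => (-c * k * x) * (y' * FF 2 (-k * (y' ^ 2 - x ^ 2))) := by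
    funext z
    have := ((Fy_deriv 1 k x z).const_mul (1 / 2)).const_mul (c * x)
    refine (this.congr_deriv ?_).deriv
    ring
  rw [h1]
  have := ((hasDerivAt_id y).mul (Fy_deriv 2 k x y)).const_mul (-c * k * x)
  refine (this.congr_deriv ?_).deriv
  simp
  ring

/-- The inverse backstepping kernel `r` is real-analytic on `ℝ²` and solves the
Goursat problem `r_xx − r_yy = (λ/D) r`, `r(0,y) = 0`, `r(x,x) = (λ/(2D)) x`. -/
theorem inverse_kernel_goursat (D lam : ℝ) (hD : 0 < D) (hlam : 0 < lam) :
    (∀ p : ℝ × ℝ, AnalyticAt ℝ (fun p : ℝ × ℝ => rker D lam p.1 p.2) p) ∧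
    (∀ x y : ℝ,
      iteratedDeriv 2 (fun x' => rker D lam x' y) x
        - iteratedDeriv 2 (fun y' => rker D lam x y') y = lam / D * rker D lam x y) ∧
    (∀ y : ℝ, rker D lam 0 y = 0) ∧
    (∀ x : ℝ, rker D lam x x = lam / (2 * D) * x) := by
  refine ⟨fun p => ?_, fun x y => ?_, fun y => ?_, fun x => ?_⟩
  · simp only [rker_eq]
    have hw : AnalyticAt ℝ (fun p : ℝ × ℝ => -(lam / (4 * D)) * (p.2 ^ 2 - p.1 ^ 2)) p :=
      analyticAt_const.mul ((analyticAt_snd.pow 2).sub (analyticAt_fst.pow 2))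
    have hF : AnalyticAt ℝ
        (fun p : ℝ × ℝ => FF 1 (-(lam / (4 * D)) * (p.2 ^ 2 - p.1 ^ 2))) p :=
      (FF_analytic 1 _).fun_comp hw
    have hx : AnalyticAt ℝ (fun p : ℝ × ℝ => lam / D * p.1) p :=
      analyticAt_const.mul analyticAt_fst
    exact hx.mul (analyticAt_const.mul hF)
  · simp only [rker_eq]
    rw [dxx, dyy, ← FF_rec 1]
    have hc : lam / D = 4 * (lam / (4 * D)) := by field_simp
    rw [hc]
    generalize lam / (4 * D) = k
    norm_num
    ring
  · simp [rker]
  · rw [rker_eq]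
    have h0 : FF 1 0 = 1 := by
      unfold FF
      rw [tsum_eq_single 0 (fun m hm => by simp [hm])]
      simp
    simp only [sub_self, mul_zero, h0]
    field_simp
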